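/- arXiv:2510.26427 — 5 statements merged into one kernel-verified Lean document; each statement's English description precedes it below -/
import Mathlib

section
/- Discrete Poynting theorem (Proposition 3.1, component form): Let ε₀, μ₀ ∈ ℝ and let E¹,E²,E³, H¹,H²,H³, B¹²,B¹³,B²³, D¹²,D¹³,D²³, J¹²,J¹³,J²³ : ℝ → ℤ³ → ℝ be time-dependent components, each differentiable in t at every lattice point. Assume for all t ∈ ℝ and (k,s,m) ∈ ℤ³: (Faraday) Δ₁E² − Δ₂E¹ = −∂ₜB¹², Δ₁E³ − Δ₃E¹ = −∂ₜB¹³, Δ₂E³ − Δ₃E² = −∂ₜB²³; (Ampère) Δ₁H² − Δ₂H¹ = ∂ₜD¹² + J¹², Δ₁H³ − Δ₃H¹ = ∂ₜD¹³ + J¹³, Δ₂H³ − Δ₃H² = ∂ₜD²³ + J²³; (constitutive D = ε₀∗E) D¹²(t,k,s,m) = ε₀E³(t,k,s,m−1), D¹³(t,k,s,m) = −ε₀E²(t,k,s−1,m), D²³(t,k,s,m) = ε₀E¹(t,k−1,s,m); (constitutive ∗B = μ₀H) B¹²(t,k−1,s−1,m) = μ₀H³(t,k,s,m), B¹³(t,k−1,s,m−1)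 = −μ₀H²(t,k,s,m), B²³(t,k,s−1,m−1) = μ₀H¹(t,k,s,m). Then for all t and (k,s,m): Δ₃[E¹(k,s,m)H²(k+1,s,m) − E²(k,s,m)H¹(k,s+1,m)] − Δ₂[E¹(k,s,m)H³(k+1,s,m) − E³(k,s,m)H¹(k,s,m+1)] + Δ₁[E²(k,s,m)H³(k,s+1,m) − E³(k,s,m)H²(k,s,m+1)] = −(1/2)·∂ₜ[E¹(k,s,m)D²³(k+1,s,m) − E²(k,s,m)D¹³(k,s+1,m) + E³(k,s,m)D¹²(k,s,m+1)] − (1/2)·∂ₜ[B¹²(k,s,m)H³(k+1,s+1,m) − B¹³(k,s,m)H²(k+1,s,m+1) + B²³(k,s,m)H¹(k,s+1,m+1)] − E¹(k,s,m)J²³(k+1,s,m) + E²(k,s,m)J¹³(k,s+1,m) − E³(k,s,m)J¹²(k,s,m+1), where all components are evaluated at time t, ∂ₜ denotes the derivative in t, and the spatial difference operators Δᵢ act in the lattice indices of the whole bracketed expression at fixed t. -/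
/-- Forward difference in the first variable on `ℤ³`. -/
def d1 (f : ℤ → ℤ → ℤ → ℝ) (k s m : ℤ) : ℝ := f (k + 1) s m - f k s m

/-- Forward difference in the second variable on `ℤ³`. -/
def d2 (f : ℤ → ℤ → ℤ → ℝ) (k s m : ℤ) : ℝ := f k (s + 1) m - f k s m

/-- Forward difference in the third variable on `ℤ³`. -/
def d3 (f : ℤ → ℤ → ℤ → ℝ) (k s m : ℤ) : ℝ := f k s (m + 1) - f k s m

/-- Discrete Poynting theorem (Proposition 3.1) for the semi-discrete Maxwell
equations on `ℤ³`, in component form. -/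
theorem stmt7 (ε₀ μ₀ : ℝ)
    (E1 E2 E3 H1 H2 H3 B12 B13 B23 D12 D13 D23 J12 J13 J23 : ℝ → ℤ → ℤ → ℤ → ℝ)
    (hE1 : ∀ k s m : ℤ, Differentiable ℝ fun t => E1 t k s m)
    (hE2 : ∀ k s m : ℤ, Differentiable ℝ fun t => E2 t k s m)
    (hE3 : ∀ k s m : ℤ, Differentiable ℝ fun t => E3 t k s m)
    (hH1 : ∀ k s m : ℤ, Differentiable ℝ fun t => H1 t k s m)
    (hH2 : ∀ k s m : ℤ, Differentiable ℝ fun t => H2 t k s m)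
    (hH3 : ∀ k s m : ℤ, Differentiable ℝ fun t => H3 t k s m)
    (hB12 : ∀ k s m : ℤ, Differentiable ℝ fun t => B12 t k s m)
    (hB13 : ∀ k s m : ℤ, Differentiable ℝ fun t => B13 t k s m)
    (hB23 : ∀ k s m : ℤ, Differentiable ℝ fun t => B23 t k s m)
    (hD12 : ∀ k s m : ℤ, Differentiable ℝ fun t => D12 t k s m)
    (hD13 : ∀ k s m : ℤ, Differentiable ℝ fun t => D13 t k s m)
    (hD23 : ∀ k s m : ℤ, Differentiable ℝ fun t => D23 t k s m)
    (hJ12 : ∀ k s m : ℤ, Differentiable ℝ fun t => J12 t k s m)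
    (hJ13 : ∀ k s m : ℤ, Differentiable ℝ fun t => J13 t k s m)
    (hJ23 : ∀ k s m : ℤ, Differentiable ℝ fun t => J23 t k s m)
    -- Faraday's law
    (hFar12 : ∀ (t : ℝ) (k s m : ℤ),
      d1 (E2 t) k s m - d2 (E1 t) k s m = -deriv (fun u => B12 u k s m) t)
    (hFar13 : ∀ (t : ℝ) (k s m : ℤ),
      d1 (E3 t) k s m - d3 (E1 t) k s m = -deriv (fun u => B13 u k s m) t)
    (hFar23 : ∀ (t : ℝ) (k s m : ℤ),
      d2 (E3 t) k s m - d3 (E2 t) k s m = -deriv (fun u => B23 u k s m) t)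
    -- Ampère's law
    (hAmp12 : ∀ (t : ℝ) (k s m : ℤ),
      d1 (H2 t) k s m - d2 (H1 t) k s m
        = deriv (fun u => D12 u k s m) t + J12 t k s m)
    (hAmp13 : ∀ (t : ℝ) (k s m : ℤ),
      d1 (H3 t) k s m - d3 (H1 t) k s m
        = deriv (fun u => D13 u k s m) t + J13 t k s m)
    (hAmp23 : ∀ (t : ℝ) (k s m : ℤ),
      d2 (H3 t) k s m - d3 (H2 t) k s m
        = deriv (fun u => D23 u k s m) t + J23 t k s m)
    -- constitutive relation D = ε₀ ∗E
    (hD12E : ∀ (t : ℝ) (k s m : ℤ), D12 t k s m = ε₀ * E3 t k s (m - 1))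
    (hD13E : ∀ (t : ℝ) (k s m : ℤ), D13 t k s m = -(ε₀ * E2 t k (s - 1) m))
    (hD23E : ∀ (t : ℝ) (k s m : ℤ), D23 t k s m = ε₀ * E1 t (k - 1) s m)
    -- constitutive relation ∗B = μ₀ H
    (hB12H : ∀ (t : ℝ) (k s m : ℤ), B12 t (k - 1) (s - 1) m = μ₀ * H3 t k s m)
    (hB13H : ∀ (t : ℝ) (k s m : ℤ), B13 t (k - 1) s (m - 1) = -(μ₀ * H2 t k s m))
    (hB23H : ∀ (t : ℝ) (k s m : ℤ), B23 t k (s - 1) (m - 1) = μ₀ * H1 t k s m) :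
    ∀ (t : ℝ) (k s m : ℤ),
      d3 (fun k s m => E1 t k s m * H2 t (k + 1) s m
            - E2 t k s m * H1 t k (s + 1) m) k s m
        - d2 (fun k s m => E1 t k s m * H3 t (k + 1) s m
            - E3 t k s m * H1 t k s (m + 1)) k s m
        + d1 (fun k s m => E2 t k s m * H3 t k (s + 1) m
            - E3 t k s m * H2 t k s (m + 1)) k s m
      = -(1 / 2) * deriv (fun u => E1 u k s m * D23 u (k + 1) s m
            - E2 u k s m * D13 u k (s + 1) m + E3 u k s m * D12 u k s (m + 1)) t
        - (1 / 2) * deriv (fun u => B12 u k s m * H3 u (k + 1) (s + 1) m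
            - B13 u k s m * H2 u (k + 1) s (m + 1)
            + B23 u k s m * H1 u k (s + 1) (m + 1)) t
        - E1 t k s m * J23 t (k + 1) s m + E2 t k s m * J13 t k (s + 1) m
        - E3 t k s m * J12 t k s (m + 1) := by
  intro t k s m
  -- shifted constitutive relations
  have eD23 : (fun u => D23 u (k + 1) s m) = fun u => ε₀ * E1 u k s m := by
    funext u; rw [hD23E, add_sub_cancel_right]
  have eD13 : (fun u => D13 u k (s + 1) m) = fun u => -(ε₀ * E2 u k s m) := by
    funext u; rw [hD13E, add_sub_cancel_right]
  have eD12 : (fun u => D12 u k s (m + 1)) = fun u => ε₀ * E3 u k s m := by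
    funext u; rw [hD12E, add_sub_cancel_right]
  have eB12 : (fun u => B12 u k s m) = fun u => μ₀ * H3 u (k + 1) (s + 1) m := by
    funext u; rw [← hB12H, add_sub_cancel_right, add_sub_cancel_right]
  have eB13 : (fun u => B13 u k s m) = fun u => -(μ₀ * H2 u (k + 1) s (m + 1)) := by
    funext u; rw [← hB13H, add_sub_cancel_right, add_sub_cancel_right]
  have eB23 : (fun u => B23 u k s m) = fun u => μ₀ * H1 u k (s + 1) (m + 1) := by
    funext u; rw [← hB23H, add_sub_cancel_right, add_sub_cancel_right]
  have F12 := hFar12 t k s m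
  have F13 := hFar13 t k s m
  have F23 := hFar23 t k s m
  have A12 := hAmp12 t k s (m + 1)
  have A13 := hAmp13 t k (s + 1) m
  have A23 := hAmp23 t (k + 1) s m
  have e1 := (hE1 k s m t).hasDerivAt
  have e2 := (hE2 k s m t).hasDerivAt
  have e3 := (hE3 k s m t).hasDerivAt
  have h1 := (hH1 k (s + 1) (m + 1) t).hasDerivAt
  have h2 := (hH2 (k + 1) s (m + 1) t).hasDerivAt
  have h3 := (hH3 (k + 1) (s + 1) m t).hasDerivAt
  rw [eB12, (h3.const_mul μ₀).deriv] at F12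
  rw [eB13, (h2.const_mul μ₀).fun_neg.deriv] at F13
  rw [eB23, (h1.const_mul μ₀).deriv] at F23
  rw [eD12, (e3.const_mul ε₀).deriv] at A12
  rw [eD13, (e2.const_mul ε₀).fun_neg.deriv] at A13
  rw [eD23, (e1.const_mul ε₀).deriv] at A23
  have X : HasDerivAt (fun u => E1 u k s m * D23 u (k + 1) s m
      - E2 u k s m * D13 u k (s + 1) m + E3 u k s m * D12 u k s (m + 1))
      (2 * ε₀ * (E1 t k s m * deriv (fun u => E1 u k s m) t
        + E2 t k s m * deriv (fun u => E2 u k s m) t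
        + E3 t k s m * deriv (fun u => E3 u k s m) t)) t := by
    have h := (((e1.fun_pow 2).fun_add (e2.fun_pow 2)).fun_add (e3.fun_pow 2)).const_mul ε₀
    refine (h.congr_of_eventuallyEq (Filter.Eventually.of_forall fun u => ?_)).congr_deriv ?_
    · beta_reduce
      rw [congrFun eD23 u, congrFun eD13 u, congrFun eD12 u]; ring
    · norm_num; ring
  have Y : HasDerivAt (fun u => B12 u k s m * H3 u (k + 1) (s + 1) m
      - B13 u k s m * H2 u (k + 1) s (m + 1)
      + B23 u k s m * H1 u k (s + 1) (m + 1))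
      (2 * μ₀ * (H1 t k (s + 1) (m + 1) * deriv (fun u => H1 u k (s + 1) (m + 1)) t
        + H2 t (k + 1) s (m + 1) * deriv (fun u => H2 u (k + 1) s (m + 1)) t
        + H3 t (k + 1) (s + 1) m * deriv (fun u => H3 u (k + 1) (s + 1) m) t)) t := by
    have h := (((h1.fun_pow 2).fun_add (h2.fun_pow 2)).fun_add (h3.fun_pow 2)).const_mul μ₀
    refine (h.congr_of_eventuallyEq (Filter.Eventually.of_forall fun u => ?_)).congr_deriv ?_
    · beta_reduce
      rw [congrFun eB23 u, congrFun eB13 u, congrFun eB12 u]; ring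
    · norm_num; ring
  rw [X.deriv, Y.deriv]
  simp only [d1, d2, d3] at *
  linear_combination (-E1 t k s m) * A23 + E2 t k s m * A13 - E3 t k s m * A12
    + H3 t (k + 1) (s + 1) m * F12 - H2 t (k + 1) s (m + 1) * F13
    + H1 t k (s + 1) (m + 1) * F23
end

section
/- Semi-discrete wave equation for the electric field (equation 3.20, component form): Let ε₀, μ₀ ∈ ℝ with ε₀ ≠ 0 and μ₀ ≠ 0, and let E¹,E²,E³, H¹,H²,H³, B¹²,B¹³,B²³, D¹²,D¹³,D²³, J¹²,J¹³,J²³ : ℝ → ℤ³ → ℝ be such that at every lattice point the E-components are twice differentiable in t and the H-, B-, D-, J-components are differentiable in t. Assume for all t and (k,s,m): (Faraday) Δ₁E² − Δ₂E¹ = −∂ₜB¹², Δ₁E³ − Δ₃E¹ = −∂ₜB¹³, Δ₂E³ − Δ₃E² = −∂ₜB²³; (Ampère) Δ₁H² − Δ₂H¹ = ∂ₜD¹² + J¹², Δ₁H³ − Δ₃H¹ = ∂ₜD¹³ + J¹³, Δ₂H³ − Δ₃H² = ∂ₜD²³ + J²³; (B = μ₀∗H) B¹²(t,k,s,m) = μ₀H³(t,k,s,m−1),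 B¹³(t,k,s,m) = −μ₀H²(t,k,s−1,m), B²³(t,k,s,m) = μ₀H¹(t,k−1,s,m); (D = ε₀∗E) D¹²(t,k,s,m) = ε₀E³(t,k,s,m−1), D¹³(t,k,s,m) = −ε₀E²(t,k,s−1,m), D²³(t,k,s,m) = ε₀E¹(t,k−1,s,m); (homogeneous Gauss law, Q = 0) Δ₁D²³ − Δ₂D¹³ + Δ₃D¹² = 0. Then for all t and (k,s,m): −(Δ₁²E¹)(k−1,s,m) − (Δ₂²E¹)(k,s−1,m) − (Δ₃²E¹)(k,s,m−1) + μ₀ε₀·∂ₜ²E¹(k−1,s−1,m−1) = −μ₀·∂ₜJ²³(k,s−1,m−1); −(Δ₁²E²)(k−1,s,m) − (Δ₂²E²)(k,s−1,m) − (Δ₃²E²)(k,s,m−1) + μ₀ε₀·∂ₜ²E²(k−1,s−1,m−1) = μ₀·∂ₜJ¹³(k−1,s,m−1); −(Δ₁²E³)(k−1,s,m) − (Δ₂²E³)(k,s−1,m) − (Δ₃²E³)(k,s,m−1) + μ₀ε₀·∂ₜ²E³(k−1,s−1,m−1) = −μ₀·∂ₜJ¹²(k−1,s−1,m), where Δᵢ²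 = Δᵢ∘Δᵢ and all components are evaluated at time t. -/
/-- Semi-discrete wave equation for the electric field (equation 3.20),
in component form. -/
theorem stmt10 (ε₀ μ₀ : ℝ) (hε₀ : ε₀ ≠ 0) (hμ₀ : μ₀ ≠ 0)
    (E1 E2 E3 H1 H2 H3 B12 B13 B23 D12 D13 D23 J12 J13 J23 : ℝ → ℤ → ℤ → ℤ → ℝ)
    -- the E-components are twice differentiable in t
    (hE1 : ∀ k s m : ℤ, Differentiable ℝ fun t => E1 t k s m)
    (hE1' : ∀ k s m : ℤ, Differentiable ℝ (deriv fun t => E1 t k s m))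
    (hE2 : ∀ k s m : ℤ, Differentiable ℝ fun t => E2 t k s m)
    (hE2' : ∀ k s m : ℤ, Differentiable ℝ (deriv fun t => E2 t k s m))
    (hE3 : ∀ k s m : ℤ, Differentiable ℝ fun t => E3 t k s m)
    (hE3' : ∀ k s m : ℤ, Differentiable ℝ (deriv fun t => E3 t k s m))
    -- the H-, B-, D-, J-components are differentiable in t
    (hH1 : ∀ k s m : ℤ, Differentiable ℝ fun t => H1 t k s m)
    (hH2 : ∀ k s m : ℤ, Differentiable ℝ fun t => H2 t k s m)
    (hH3 : ∀ k s m : ℤ, Differentiable ℝ fun t => H3 t k s m)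
    (hB12 : ∀ k s m : ℤ, Differentiable ℝ fun t => B12 t k s m)
    (hB13 : ∀ k s m : ℤ, Differentiable ℝ fun t => B13 t k s m)
    (hB23 : ∀ k s m : ℤ, Differentiable ℝ fun t => B23 t k s m)
    (hD12 : ∀ k s m : ℤ, Differentiable ℝ fun t => D12 t k s m)
    (hD13 : ∀ k s m : ℤ, Differentiable ℝ fun t => D13 t k s m)
    (hD23 : ∀ k s m : ℤ, Differentiable ℝ fun t => D23 t k s m)
    (hJ12 : ∀ k s m : ℤ, Differentiable ℝ fun t => J12 t k s m)
    (hJ13 : ∀ k s m : ℤ, Differentiable ℝ fun t => J13 t k s m)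
    (hJ23 : ∀ k s m : ℤ, Differentiable ℝ fun t => J23 t k s m)
    -- Faraday's law
    (hFar12 : ∀ (t : ℝ) (k s m : ℤ),
      d1 (E2 t) k s m - d2 (E1 t) k s m = -deriv (fun u => B12 u k s m) t)
    (hFar13 : ∀ (t : ℝ) (k s m : ℤ),
      d1 (E3 t) k s m - d3 (E1 t) k s m = -deriv (fun u => B13 u k s m) t)
    (hFar23 : ∀ (t : ℝ) (k s m : ℤ),
      d2 (E3 t) k s m - d3 (E2 t) k s m = -deriv (fun u => B23 u k s m) t)
    -- Ampère's law
    (hAmp12 : ∀ (t : ℝ) (k s m : ℤ),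
      d1 (H2 t) k s m - d2 (H1 t) k s m
        = deriv (fun u => D12 u k s m) t + J12 t k s m)
    (hAmp13 : ∀ (t : ℝ) (k s m : ℤ),
      d1 (H3 t) k s m - d3 (H1 t) k s m
        = deriv (fun u => D13 u k s m) t + J13 t k s m)
    (hAmp23 : ∀ (t : ℝ) (k s m : ℤ),
      d2 (H3 t) k s m - d3 (H2 t) k s m
        = deriv (fun u => D23 u k s m) t + J23 t k s m)
    -- constitutive relation B = μ₀ ∗H
    (hB12H : ∀ (t : ℝ) (k s m : ℤ), B12 t k s m = μ₀ * H3 t k s (m - 1))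
    (hB13H : ∀ (t : ℝ) (k s m : ℤ), B13 t k s m = -(μ₀ * H2 t k (s - 1) m))
    (hB23H : ∀ (t : ℝ) (k s m : ℤ), B23 t k s m = μ₀ * H1 t (k - 1) s m)
    -- constitutive relation D = ε₀ ∗E
    (hD12E : ∀ (t : ℝ) (k s m : ℤ), D12 t k s m = ε₀ * E3 t k s (m - 1))
    (hD13E : ∀ (t : ℝ) (k s m : ℤ), D13 t k s m = -(ε₀ * E2 t k (s - 1) m))
    (hD23E : ∀ (t : ℝ) (k s m : ℤ), D23 t k s m = ε₀ * E1 t (k - 1) s m)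
    -- homogeneous discrete Gauss law (Q = 0)
    (hGauss : ∀ (t : ℝ) (k s m : ℤ),
      d1 (D23 t) k s m - d2 (D13 t) k s m + d3 (D12 t) k s m = 0) :
    ∀ (t : ℝ) (k s m : ℤ),
      (-d1 (d1 (E1 t)) (k - 1) s m - d2 (d2 (E1 t)) k (s - 1) m
          - d3 (d3 (E1 t)) k s (m - 1)
          + μ₀ * ε₀ * deriv (deriv fun u => E1 u (k - 1) (s - 1) (m - 1)) t
        = -(μ₀ * deriv (fun u => J23 u k (s - 1) (m - 1)) t)) ∧
      (-d1 (d1 (E2 t)) (k - 1) s m - d2 (d2 (E2 t)) k (s - 1) m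
          - d3 (d3 (E2 t)) k s (m - 1)
          + μ₀ * ε₀ * deriv (deriv fun u => E2 u (k - 1) (s - 1) (m - 1)) t
        = μ₀ * deriv (fun u => J13 u (k - 1) s (m - 1)) t) ∧
      (-d1 (d1 (E3 t)) (k - 1) s m - d2 (d2 (E3 t)) k (s - 1) m
          - d3 (d3 (E3 t)) k s (m - 1)
          + μ₀ * ε₀ * deriv (deriv fun u => E3 u (k - 1) (s - 1) (m - 1)) t
        = -(μ₀ * deriv (fun u => J12 u (k - 1) (s - 1) m) t)) := by
  have fH3 : ∀ (t : ℝ) (k s m : ℤ),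
      d1 (E2 t) k s m - d2 (E1 t) k s m = -(μ₀ * deriv (fun u => H3 u k s (m - 1)) t) := by
    intro t k s m
    rw [hFar12, funext (fun u => hB12H u k s m), deriv_const_mul_field]
  have fH2 : ∀ (t : ℝ) (k s m : ℤ),
      d1 (E3 t) k s m - d3 (E1 t) k s m = μ₀ * deriv (fun u => H2 u k (s - 1) m) t := by
    intro t k s m
    rw [hFar13, funext (fun u => hB13H u k s m), deriv.fun_neg, deriv_const_mul_field, neg_neg]
  have fH1 : ∀ (t : ℝ) (k s m : ℤ),
      d2 (E3 t) k s m - d3 (E2 t) k s m = -(μ₀ * deriv (fun u => H1 u (k - 1) s m) t) := by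
    intro t k s m
    rw [hFar23, funext (fun u => hB23H u k s m), deriv_const_mul_field]
  have key : ∀ (a b c d e j : ℝ → ℝ) (r : ℝ), Differentiable ℝ a → Differentiable ℝ b →
      Differentiable ℝ c → Differentiable ℝ d → Differentiable ℝ (deriv e) →
      Differentiable ℝ j →
      (∀ t, a t - b t - (c t - d t) = r * deriv e t + j t) → ∀ t,
      deriv a t - deriv b t - (deriv c t - deriv d t)
        = r * deriv (deriv e) t + deriv j t := by
    intro a b c d e j r ha hb hc hd he hj h t
    have h1 := (((ha t).hasDerivAt.sub (hb t).hasDerivAt).sub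
      ((hc t).hasDerivAt.sub (hd t).hasDerivAt))
    have h2 := (((he t).hasDerivAt.const_mul r).add (hj t).hasDerivAt)
    refine h1.unique (h2.congr_of_eventuallyEq (Filter.Eventually.of_forall fun u => ?_))
    exact h u
  have a23 : ∀ (t : ℝ) (k s m : ℤ), _ := fun t k s m =>
    key _ _ _ _ _ _ ε₀ (hH3 k (s + 1) m) (hH3 k s m) (hH2 k s (m + 1)) (hH2 k s m)
      (hE1' (k - 1) s m) (hJ23 k s m) (fun t => by
        have := hAmp23 t k s m
        rwa [funext (fun u => hD23E u k s m), deriv_const_mul_field] at this) t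
  have a13 : ∀ (t : ℝ) (k s m : ℤ), _ := fun t k s m =>
    key _ _ _ _ _ _ (-ε₀) (hH3 (k + 1) s m) (hH3 k s m) (hH1 k s (m + 1)) (hH1 k s m)
      (hE2' k (s - 1) m) (hJ13 k s m) (fun t => by
        have := hAmp13 t k s m
        rwa [funext (fun u => hD13E u k s m), deriv.fun_neg, deriv_const_mul_field,
          ← neg_mul] at this) t
  have a12 : ∀ (t : ℝ) (k s m : ℤ), _ := fun t k s m =>
    key _ _ _ _ _ _ ε₀ (hH2 (k + 1) s m) (hH2 k s m) (hH1 k (s + 1) m) (hH1 k s m)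
      (hE3' k s (m - 1)) (hJ12 k s m) (fun t => by
        have := hAmp12 t k s m
        rwa [funext (fun u => hD12E u k s m), deriv_const_mul_field] at this) t
  have g : ∀ (t : ℝ) (k s m : ℤ),
      d1 (E1 t) (k - 1) s m + d2 (E2 t) k (s - 1) m + d3 (E3 t) k s (m - 1) = 0 := by
    intro t k s m
    have h := hGauss t k s m
    simp only [d1, d2, d3, hD12E, hD13E, hD23E] at h ⊢
    apply mul_left_cancel₀ hε₀
    simp only [add_sub_cancel_right, sub_add_cancel] at h ⊢
    linear_combination h
  intro t k s m
  refine ⟨?_, ?_, ?_⟩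
  · have h := a23 t k (s - 1) (m - 1)
    have e1 := fH3 t k s m
    have e2 := fH3 t k (s - 1) m
    have e3 := fH2 t k s m
    have e4 := fH2 t k s (m - 1)
    have g1 := g t k s m
    have g2 := g t (k + 1) s m
    simp only [d1, d2, d3, add_sub_cancel_right, sub_add_cancel] at h e1 e2 e3 e4 g1 g2 ⊢
    linear_combination (-μ₀) * h + e1 - e2 + e3 - e4 - g2 + g1
  · have h := a13 t (k - 1) s (m - 1)
    have e1 := fH3 t k s m
    have e2 := fH3 t (k - 1) s m
    have e3 := fH1 t k s m
    have e4 := fH1 t k s (m - 1)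
    have g1 := g t k s m
    have g2 := g t k (s + 1) m
    simp only [d1, d2, d3, add_sub_cancel_right, sub_add_cancel] at h e1 e2 e3 e4 g1 g2 ⊢
    linear_combination μ₀ * h - e1 + e2 + e3 - e4 - g2 + g1
  · have h := a12 t (k - 1) (s - 1) m
    have e1 := fH2 t k s m
    have e2 := fH2 t (k - 1) s m
    have e3 := fH1 t k s m
    have e4 := fH1 t k (s - 1) m
    have g1 := g t k s m
    have g2 := g t k s (m + 1)
    simp only [d1, d2, d3, add_sub_cancel_right, sub_add_cancel] at h e1 e2 e3 e4 g1 g2 ⊢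
    linear_combination (-μ₀) * h - e1 + e2 - e3 + e4 - g2 + g1
end

section
/- Semi-discrete wave equation for the vector potential (equation 3.26, component form): Let ε₀, μ₀ ∈ ℝ with ε₀ ≠ 0 and μ₀ ≠ 0, and let A¹,A²,A³, Φ : ℝ → ℤ³ → ℝ be twice differentiable in t at every lattice point, and let H¹,H²,H³, B¹²,B¹³,B²³, D¹²,D¹³,D²³, J¹²,J¹³,J²³ : ℝ → ℤ³ → ℝ with the D-components differentiable in t. Define Eⁱ(t,p) = −(ΔᵢΦ)(t,p) − ∂ₜAⁱ(t,p) for i = 1,2,3. Assume for all t and (k,s,m): (B = dᶜA) B¹² = Δ₁A² − Δ₂A¹, B¹³ = Δ₁A³ − Δ₃A¹, B²³ = Δ₂A³ − Δ₃A²; (Ampère) Δ₁H² − Δ₂H¹ = ∂ₜD¹² + J¹², Δ₁H³ − Δ₃H¹ = ∂ₜD¹³ + J¹³, Δ₂H³ − Δ₃H² = ∂ₜD²³ + J²³; (D = ε₀∗E) D¹²(t,k,s,m) = ε₀E³(t,k,s,m−1), D¹³(t,k,s,m) = −ε₀E²(t,k,s−1,m), D²³(t,k,s,m) = ε₀E¹(t,k−1,s,m);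 (∗B = μ₀H) B¹²(t,k−1,s−1,m) = μ₀H³(t,k,s,m), B¹³(t,k−1,s,m−1) = −μ₀H²(t,k,s,m), B²³(t,k,s−1,m−1) = μ₀H¹(t,k,s,m); (Lorentz gauge) (Δ₁A¹)(t,k−1,s,m) + (Δ₂A²)(t,k,s−1,m) + (Δ₃A³)(t,k,s,m−1) + μ₀ε₀·∂ₜΦ(t,k,s,m) = 0. Then for all t and (k,s,m): −(Δ₁²A¹)(k−1,s,m) − (Δ₂²A¹)(k,s−1,m) − (Δ₃²A¹)(k,s,m−1) + μ₀ε₀·∂ₜ²A¹(k,s,m) = μ₀J²³(k+1,s,m); −(Δ₁²A²)(k−1,s,m) − (Δ₂²A²)(k,s−1,m) − (Δ₃²A²)(k,s,m−1) + μ₀ε₀·∂ₜ²A²(k,s,m) = −μ₀J¹³(k,s+1,m); −(Δ₁²A³)(k−1,s,m) − (Δ₂²A³)(k,s−1,m) − (Δ₃²A³)(k,s,m−1) + μ₀ε₀·∂ₜ²A³(k,s,m) = μ₀J¹²(k,s,m+1), where Δᵢ² = Δᵢ∘Δᵢ and all components are evaluated at time t. -/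
/-- Time derivative of a constitutive expression. -/
lemma deriv_aux (c : ℝ) (f g a : ℝ → ℝ) (hf : Differentiable ℝ f) (hg : Differentiable ℝ g)
    (ha : Differentiable ℝ (deriv a)) (t : ℝ) :
    deriv (fun u => c * (-(f u - g u) - deriv a u)) t
      = c * (-(deriv f t - deriv g t) - deriv (deriv a) t) :=
  ((((hf t).hasDerivAt.sub (hg t).hasDerivAt).neg.sub (ha t).hasDerivAt).const_mul c).deriv

/-- Semi-discrete wave equation for the discrete magnetic vector potential
(equation 3.26), in component form. -/
theorem stmt11 (ε₀ μ₀ : ℝ) (hε₀ : ε₀ ≠ 0) (hμ₀ : μ₀ ≠ 0)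
    (A1 A2 A3 Φ : ℝ → ℤ → ℤ → ℤ → ℝ)
    (H1 H2 H3 B12 B13 B23 D12 D13 D23 J12 J13 J23 : ℝ → ℤ → ℤ → ℤ → ℝ)
    -- A and Φ are twice differentiable in t
    (hA1 : ∀ k s m : ℤ, Differentiable ℝ fun t => A1 t k s m)
    (hA1' : ∀ k s m : ℤ, Differentiable ℝ (deriv fun t => A1 t k s m))
    (hA2 : ∀ k s m : ℤ, Differentiable ℝ fun t => A2 t k s m)
    (hA2' : ∀ k s m : ℤ, Differentiable ℝ (deriv fun t => A2 t k s m))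
    (hA3 : ∀ k s m : ℤ, Differentiable ℝ fun t => A3 t k s m)
    (hA3' : ∀ k s m : ℤ, Differentiable ℝ (deriv fun t => A3 t k s m))
    (hΦ : ∀ k s m : ℤ, Differentiable ℝ fun t => Φ t k s m)
    (hΦ' : ∀ k s m : ℤ, Differentiable ℝ (deriv fun t => Φ t k s m))
    -- the D-components are differentiable in t
    (hD12 : ∀ k s m : ℤ, Differentiable ℝ fun t => D12 t k s m)
    (hD13 : ∀ k s m : ℤ, Differentiable ℝ fun t => D13 t k s m)
    (hD23 : ∀ k s m : ℤ, Differentiable ℝ fun t => D23 t k s m)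
    -- the electric field E = −dᶜΦ − ∂ₜA
    (E1 E2 E3 : ℝ → ℤ → ℤ → ℤ → ℝ)
    (hE1 : ∀ (t : ℝ) (k s m : ℤ),
      E1 t k s m = -d1 (Φ t) k s m - deriv (fun u => A1 u k s m) t)
    (hE2 : ∀ (t : ℝ) (k s m : ℤ),
      E2 t k s m = -d2 (Φ t) k s m - deriv (fun u => A2 u k s m) t)
    (hE3 : ∀ (t : ℝ) (k s m : ℤ),
      E3 t k s m = -d3 (Φ t) k s m - deriv (fun u => A3 u k s m) t)
    -- B = dᶜA
    (hB12 : ∀ (t : ℝ) (k s m : ℤ),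
      B12 t k s m = d1 (A2 t) k s m - d2 (A1 t) k s m)
    (hB13 : ∀ (t : ℝ) (k s m : ℤ),
      B13 t k s m = d1 (A3 t) k s m - d3 (A1 t) k s m)
    (hB23 : ∀ (t : ℝ) (k s m : ℤ),
      B23 t k s m = d2 (A3 t) k s m - d3 (A2 t) k s m)
    -- Ampère's law
    (hAmp12 : ∀ (t : ℝ) (k s m : ℤ),
      d1 (H2 t) k s m - d2 (H1 t) k s m
        = deriv (fun u => D12 u k s m) t + J12 t k s m)
    (hAmp13 : ∀ (t : ℝ) (k s m : ℤ),
      d1 (H3 t) k s m - d3 (H1 t) k s m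
        = deriv (fun u => D13 u k s m) t + J13 t k s m)
    (hAmp23 : ∀ (t : ℝ) (k s m : ℤ),
      d2 (H3 t) k s m - d3 (H2 t) k s m
        = deriv (fun u => D23 u k s m) t + J23 t k s m)
    -- constitutive relation D = ε₀ ∗E
    (hD12E : ∀ (t : ℝ) (k s m : ℤ), D12 t k s m = ε₀ * E3 t k s (m - 1))
    (hD13E : ∀ (t : ℝ) (k s m : ℤ), D13 t k s m = -(ε₀ * E2 t k (s - 1) m))
    (hD23E : ∀ (t : ℝ) (k s m : ℤ), D23 t k s m = ε₀ * E1 t (k - 1) s m)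
    -- constitutive relation ∗B = μ₀ H
    (hB12H : ∀ (t : ℝ) (k s m : ℤ), B12 t (k - 1) (s - 1) m = μ₀ * H3 t k s m)
    (hB13H : ∀ (t : ℝ) (k s m : ℤ), B13 t (k - 1) s (m - 1) = -(μ₀ * H2 t k s m))
    (hB23H : ∀ (t : ℝ) (k s m : ℤ), B23 t k (s - 1) (m - 1) = μ₀ * H1 t k s m)
    -- Lorentz gauge condition
    (hGauge : ∀ (t : ℝ) (k s m : ℤ),
      d1 (A1 t) (k - 1) s m + d2 (A2 t) k (s - 1) m + d3 (A3 t) k s (m - 1)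
        + μ₀ * ε₀ * deriv (fun u => Φ u k s m) t = 0) :
    ∀ (t : ℝ) (k s m : ℤ),
      (-d1 (d1 (A1 t)) (k - 1) s m - d2 (d2 (A1 t)) k (s - 1) m
          - d3 (d3 (A1 t)) k s (m - 1)
          + μ₀ * ε₀ * deriv (deriv fun u => A1 u k s m) t
        = μ₀ * J23 t (k + 1) s m) ∧
      (-d1 (d1 (A2 t)) (k - 1) s m - d2 (d2 (A2 t)) k (s - 1) m
          - d3 (d3 (A2 t)) k s (m - 1)
          + μ₀ * ε₀ * deriv (deriv fun u => A2 u k s m) t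
        = -(μ₀ * J13 t k (s + 1) m)) ∧
      (-d1 (d1 (A3 t)) (k - 1) s m - d2 (d2 (A3 t)) k (s - 1) m
          - d3 (d3 (A3 t)) k s (m - 1)
          + μ₀ * ε₀ * deriv (deriv fun u => A3 u k s m) t
        = μ₀ * J12 t k s (m + 1)) := by
  have e23 : ∀ (t : ℝ) (k s m : ℤ), deriv (fun u => D23 u (k + 1) s m) t
      = ε₀ * (-(deriv (fun u => Φ u (k + 1) s m) t - deriv (fun u => Φ u k s m) t)
        - deriv (deriv fun u => A1 u k s m) t) := by
    intro t k s m
    rw [← deriv_aux ε₀ _ _ _ (hΦ _ _ _) (hΦ _ _ _) (hA1' _ _ _)]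
    congr 1
    funext u
    rw [hD23E, hE1, add_sub_cancel_right, d1]
  have e13 : ∀ (t : ℝ) (k s m : ℤ), deriv (fun u => D13 u k (s + 1) m) t
      = (-ε₀) * (-(deriv (fun u => Φ u k (s + 1) m) t - deriv (fun u => Φ u k s m) t)
        - deriv (deriv fun u => A2 u k s m) t) := by
    intro t k s m
    rw [← deriv_aux (-ε₀) _ _ _ (hΦ _ _ _) (hΦ _ _ _) (hA2' _ _ _)]
    congr 1
    funext u
    rw [hD13E, hE2, add_sub_cancel_right, d2, neg_mul]
  have e12 : ∀ (t : ℝ) (k s m : ℤ), deriv (fun u => D12 u k s (m + 1)) t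
      = ε₀ * (-(deriv (fun u => Φ u k s (m + 1)) t - deriv (fun u => Φ u k s m) t)
        - deriv (deriv fun u => A3 u k s m) t) := by
    intro t k s m
    rw [← deriv_aux ε₀ _ _ _ (hΦ _ _ _) (hΦ _ _ _) (hA3' _ _ _)]
    congr 1
    funext u
    rw [hD12E, hE3, add_sub_cancel_right, d3]
  intro t k s m
  have g0 := hGauge t k s m
  simp only [hB12, hB13, hB23] at hB12H hB13H hB23H
  refine ⟨?_, ?_, ?_⟩
  · have g1 := hGauge t (k + 1) s m
    have a := hAmp23 t (k + 1) s m
    have b1 := hB12H t (k + 1) (s + 1) m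
    have b2 := hB12H t (k + 1) s m
    have b3 := hB13H t (k + 1) s (m + 1)
    have b4 := hB13H t (k + 1) s m
    rw [e23] at a
    simp only [d1, d2, d3, add_sub_cancel_right, sub_add_cancel] at *
    linear_combination g0 - g1 + μ₀ * a + b1 - b2 + b3 - b4
  · have g1 := hGauge t k (s + 1) m
    have a := hAmp13 t k (s + 1) m
    have b1 := hB12H t (k + 1) (s + 1) m
    have b2 := hB12H t k (s + 1) m
    have b3 := hB23H t k (s + 1) (m + 1)
    have b4 := hB23H t k (s + 1) m
    rw [e13] at a
    simp only [d1, d2, d3, add_sub_cancel_right, sub_add_cancel] at *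
    linear_combination g0 - g1 - μ₀ * a - b1 + b2 + b3 - b4
  · have g1 := hGauge t k s (m + 1)
    have a := hAmp12 t k s (m + 1)
    have b1 := hB13H t (k + 1) s (m + 1)
    have b2 := hB13H t k s (m + 1)
    have b3 := hB23H t k (s + 1) (m + 1)
    have b4 := hB23H t k s (m + 1)
    rw [e12] at a
    simp only [d1, d2, d3, add_sub_cancel_right, sub_add_cancel] at *
    linear_combination g0 - g1 + μ₀ * a - b1 + b2 - b3 + b4
end

section
/- Semi-discrete wave equation for the scalar potential (component form): Let ε₀, μ₀ ∈ ℝ with ε₀ ≠ 0, and let Φ : ℝ → ℤ³ → ℝ be twice differentiable in t at every lattice point, A¹,A²,A³ : ℝ → ℤ³ → ℝ differentiable in t at every lattice point, and D¹²,D¹³,D²³, Q : ℝ → ℤ³ → ℝ. Define Eⁱ(t,p) = −(ΔᵢΦ)(t,p) − ∂ₜAⁱ(t,p) for i = 1,2,3. Assume for all t and (k,s,m): (Gauss law) (Δ₁D²³)(k,s,m) − (Δ₂D¹³)(k,s,m) + (Δ₃D¹²)(k,s,m) = Q(k,s,m); (D = ε₀∗E) D¹²(t,k,s,m) = ε₀E³(t,k,s,m−1),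 D¹³(t,k,s,m) = −ε₀E²(t,k,s−1,m), D²³(t,k,s,m) = ε₀E¹(t,k−1,s,m); (Lorentz gauge) (Δ₁A¹)(t,k−1,s,m) + (Δ₂A²)(t,k,s−1,m) + (Δ₃A³)(t,k,s,m−1) + μ₀ε₀·∂ₜΦ(t,k,s,m) = 0. Then for all t and (k,s,m): −(Δ₁²Φ)(k−1,s,m) − (Δ₂²Φ)(k,s−1,m) − (Δ₃²Φ)(k,s,m−1) + μ₀ε₀·∂ₜ²Φ(k,s,m) = (1/ε₀)·Q(k,s,m), where Δᵢ² = Δᵢ∘Δᵢ and all components are evaluated at time t. -/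
/-- Semi-discrete wave equation for the discrete scalar potential,
in component form. -/
theorem stmt12 (ε₀ μ₀ : ℝ) (hε₀ : ε₀ ≠ 0)
    (Φ A1 A2 A3 D12 D13 D23 Q : ℝ → ℤ → ℤ → ℤ → ℝ)
    -- Φ is twice differentiable in t
    (hΦ : ∀ k s m : ℤ, Differentiable ℝ fun t => Φ t k s m)
    (hΦ' : ∀ k s m : ℤ, Differentiable ℝ (deriv fun t => Φ t k s m))
    -- the A-components are differentiable in t
    (hA1 : ∀ k s m : ℤ, Differentiable ℝ fun t => A1 t k s m)
    (hA2 : ∀ k s m : ℤ, Differentiable ℝ fun t => A2 t k s m)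
    (hA3 : ∀ k s m : ℤ, Differentiable ℝ fun t => A3 t k s m)
    -- the electric field E = −dᶜΦ − ∂ₜA
    (E1 E2 E3 : ℝ → ℤ → ℤ → ℤ → ℝ)
    (hE1 : ∀ (t : ℝ) (k s m : ℤ),
      E1 t k s m = -d1 (Φ t) k s m - deriv (fun u => A1 u k s m) t)
    (hE2 : ∀ (t : ℝ) (k s m : ℤ),
      E2 t k s m = -d2 (Φ t) k s m - deriv (fun u => A2 u k s m) t)
    (hE3 : ∀ (t : ℝ) (k s m : ℤ),
      E3 t k s m = -d3 (Φ t) k s m - deriv (fun u => A3 u k s m) t)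
    -- discrete Gauss law dᶜD = Q
    (hGauss : ∀ (t : ℝ) (k s m : ℤ),
      d1 (D23 t) k s m - d2 (D13 t) k s m + d3 (D12 t) k s m = Q t k s m)
    -- constitutive relation D = ε₀ ∗E
    (hD12E : ∀ (t : ℝ) (k s m : ℤ), D12 t k s m = ε₀ * E3 t k s (m - 1))
    (hD13E : ∀ (t : ℝ) (k s m : ℤ), D13 t k s m = -(ε₀ * E2 t k (s - 1) m))
    (hD23E : ∀ (t : ℝ) (k s m : ℤ), D23 t k s m = ε₀ * E1 t (k - 1) s m)
    -- Lorentz gauge condition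
    (hGauge : ∀ (t : ℝ) (k s m : ℤ),
      d1 (A1 t) (k - 1) s m + d2 (A2 t) k (s - 1) m + d3 (A3 t) k s (m - 1)
        + μ₀ * ε₀ * deriv (fun u => Φ u k s m) t = 0) :
    ∀ (t : ℝ) (k s m : ℤ),
      -d1 (d1 (Φ t)) (k - 1) s m - d2 (d2 (Φ t)) k (s - 1) m
          - d3 (d3 (Φ t)) k s (m - 1)
          + μ₀ * ε₀ * deriv (deriv fun u => Φ u k s m) t
        = (1 / ε₀) * Q t k s m := by
  intro t k s m
  have H : HasDerivAt (fun u => d1 (A1 u) (k - 1) s m + d2 (A2 u) k (s - 1) m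
      + d3 (A3 u) k s (m - 1) + μ₀ * ε₀ * deriv (fun v => Φ v k s m) u) _ t :=
    (((((hA1 (k - 1 + 1) s m) t).hasDerivAt.sub ((hA1 (k - 1) s m) t).hasDerivAt).add
      (((hA2 k (s - 1 + 1) m) t).hasDerivAt.sub ((hA2 k (s - 1) m) t).hasDerivAt)).add
      (((hA3 k s (m - 1 + 1)) t).hasDerivAt.sub ((hA3 k s (m - 1)) t).hasDerivAt)).add
      (((hΦ' k s m) t).hasDerivAt.const_mul (μ₀ * ε₀))
  have H0 : HasDerivAt (fun u => d1 (A1 u) (k - 1) s m + d2 (A2 u) k (s - 1) m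
      + d3 (A3 u) k s (m - 1) + μ₀ * ε₀ * deriv (fun v => Φ v k s m) u) 0 t := by
    have h : (fun u => d1 (A1 u) (k - 1) s m + d2 (A2 u) k (s - 1) m
      + d3 (A3 u) k s (m - 1) + μ₀ * ε₀ * deriv (fun v => Φ v k s m) u) = fun _ => (0 : ℝ) :=
      funext fun u => hGauge u k s m
    rw [h]
    exact hasDerivAt_const t 0
  have key := H.unique H0
  rw [← hGauss t k s m]
  simp only [d1, d2, d3, hD12E, hD13E, hD23E, hE1, hE2, hE3, sub_add_cancel,
    add_sub_cancel_right] at key ⊢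
  field_simp
  linear_combination key
end

section
/- The characteristic polynomial of the 9×9 real matrix M₂ equals X³·(X − 2)²·(X + 2)²·(X² + 8); equivalently, det(M₂ − λI) = −λ³(λ − 2)²(λ + 2)²(λ² + 8). In particular the eigenvalues of M₂ are 0 (multiplicity 3), 2 and −2 (each multiplicity 2), and ±2√2·i (each multiplicity 1). -/
open Polynomial

/-- The coefficient matrix of the reduced system (4.21) of the two-dimensional
semi-discrete Maxwell equations on the combinatorial torus. -/
def M₂ : Matrix (Fin 9) (Fin 9) ℝ :=
  !![0, 0, 0, 0, 0, -1, 0, 1, 0;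
     0, 0, 0, 0, 0, 0, 0, 1, -1;
     0, 0, 0, 0, 0, 1, 0, -1, 0;
     0, 0, 0, 0, 0, -1, 1, 0, 0;
     0, 0, 0, 0, 0, 0, 0, -1, 1;
     -1, 1, 1, 2, -3, 0, 0, 0, 0;
     -1, -1, 1, 0, 1, 0, 0, 0, 0;
     1, 1, -1, -4, 3, 0, 0, 0, 0;
     1, -1, -1, 2, -1, 0, 0, 0, 0]

/-- Integer version of `M₂`. -/
def MZ : Matrix (Fin 9) (Fin 9) ℤ :=
  !![0, 0, 0, 0, 0, -1, 0, 1, 0;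
     0, 0, 0, 0, 0, 0, 0, 1, -1;
     0, 0, 0, 0, 0, 1, 0, -1, 0;
     0, 0, 0, 0, 0, -1, 1, 0, 0;
     0, 0, 0, 0, 0, 0, 0, -1, 1;
     -1, 1, 1, 2, -3, 0, 0, 0, 0;
     -1, -1, 1, 0, 1, 0, 0, 0, 0;
     1, 1, -1, -4, 3, 0, 0, 0, 0;
     1, -1, -1, 2, -1, 0, 0, 0, 0]

/-- Columns: an eigenbasis (with a real 2×2 block at the end). -/
def PZ : Matrix (Fin 9) (Fin 9) ℤ :=
  !![1, 0, 0, -1, -1, -1, -1, 0, -2;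
     0, -3, 0, 1, -1, 1, -1, 0, -2;
     1, 0, 0, 1, 1, 1, 1, 0, 2;
     0, -3, 0, -1, 1, -1, 1, 0, -2;
     0, -3, 0, -1, 1, -1, 1, 0, 2;
     0, 0, 1, 2, 0, -2, 0, 1, 0;
     0, 0, 1, 0, 2, 0, -2, -1, 0;
     0, 0, 1, 0, -2, 0, 2, -1, 0;
     0, 0, 1, -2, 0, 2, 0, 1, 0]

/-- A multiple of the inverse of `PZ`. -/
def QZ : Matrix (Fin 9) (Fin 9) ℤ :=
  !![12, 0, 12, 0, 0, 0, 0, 0, 0;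
     0, -4, 0, 0, -4, 0, 0, 0, 0;
     0, 0, 0, 0, 0, 6, 6, 6, 6;
     -3, 3, 3, 0, -3, 3, 0, 0, -3;
     -3, -3, 3, 6, -3, 0, 3, -3, 0;
     -3, 3, 3, 0, -3, -3, 0, 0, 3;
     -3, -3, 3, 6, -3, 0, -3, 3, 0;
     0, 0, 0, 0, 0, 6, -6, -6, 6;
     0, 0, 0, -6, 6, 0, 0, 0, 0]

/-- The block diagonal form. -/
def DZ : Matrix (Fin 9) (Fin 9) ℤ :=
  Matrix.reindex (finSumFinEquiv (m := 7) (n := 2)) (finSumFinEquiv (m := 7) (n := 2))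
    (Matrix.fromBlocks (Matrix.diagonal ![0, 0, 0, 2, 2, -2, -2]) 0 0 !![0, -8; 1, 0])

theorem MZ_mul_PZ : MZ * PZ = PZ * DZ := by decide +kernel

theorem QZ_mul_PZ : QZ * PZ = Matrix.diagonal (fun _ => 24) := by decide +kernel

theorem PZ_det_ne_zero : PZ.det ≠ 0 := by
  intro h
  have h1 := congrArg Matrix.det QZ_mul_PZ
  rw [Matrix.det_mul, h, Matrix.det_diagonal] at h1
  simp at h1

/-- Matrices intertwined by a matrix of nonzero determinant have equal characteristic
polynomials. -/
theorem charpoly_eq_of_intertwine {n : Type*} [Fintype n] [DecidableEq n]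
    (M P D : Matrix n n ℤ) (hM : M * P = P * D)
    (hP : P.det ≠ 0) : M.charpoly = D.charpoly := by
  have h : M.charmatrix * P.map C = P.map C * D.charmatrix := by
    have h1 : M.map C * P.map C = P.map C * D.map (C : ℤ →+* ℤ[X]) := by
      rw [← Matrix.map_mul, ← Matrix.map_mul, hM]
    have h2 : Matrix.scalar n (X : ℤ[X]) * P.map C =
        P.map C * Matrix.scalar n (X : ℤ[X]) :=
      (Matrix.scalar_commute _ (fun r => Commute.all _ _) _).eq
    simp only [Matrix.charmatrix, sub_mul, mul_sub, RingHom.mapMatrix_apply]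
    rw [h1, h2]
  have h3 := congrArg Matrix.det h
  rw [Matrix.det_mul, Matrix.det_mul, mul_comm] at h3
  unfold Matrix.charpoly
  refine mul_left_cancel₀ ?_ h3
  have h4 : (P.map (C : ℤ →+* ℤ[X])).det = C P.det := by
    rw [RingHom.map_det, RingHom.mapMatrix_apply]
  rw [h4]
  exact C_ne_zero.mpr hP

theorem MZ_charpoly_eq : MZ.charpoly = DZ.charpoly :=
  charpoly_eq_of_intertwine MZ PZ DZ MZ_mul_PZ PZ_det_ne_zero

theorem DZ_charpoly :
    DZ.charpoly = X ^ 3 * (X - C 2) ^ 2 * (X + C 2) ^ 2 * (X ^ 2 + C 8) := by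
  have hd : (Matrix.diagonal ![(0 : ℤ), 0, 0, 2, 2, -2, -2]).charpoly =
      X ^ 3 * (X - C 2) ^ 2 * (X + C 2) ^ 2 := by
    rw [Matrix.charpoly_of_isUpperTriangular _ (Matrix.blockTriangular_diagonal _)]
    simp [Fin.prod_univ_succ]
    ring
  have h2 : (!![(0 : ℤ), -8; 1, 0]).charpoly = X ^ 2 + C 8 := by
    rw [Matrix.charpoly_fin_two]
    simp [Matrix.trace_fin_two, Matrix.det_fin_two]
  rw [DZ, Matrix.charpoly_reindex, Matrix.charpoly_fromBlocks_zero₁₂, hd, h2]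

theorem M₂_eq_map : M₂ = MZ.map (Int.castRingHom ℝ) := by
  ext i j
  fin_cases i <;> fin_cases j <;> simp [M₂, MZ]

/-- The characteristic polynomial of `M₂` is `X³(X − 2)²(X + 2)²(X² + 8)`. -/
theorem stmt16 :
    M₂.charpoly = X ^ 3 * (X - C 2) ^ 2 * (X + C 2) ^ 2 * (X ^ 2 + C 8) := by
  rw [M₂_eq_map, Matrix.charpoly_map, MZ_charpoly_eq, DZ_charpoly]
  have h2 : (C 2 : ℝ[X]) = 2 := rfl
  have h8 : (C 8 : ℝ[X]) = 8 := rfl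
  rw [h2, h8]
  simp [Polynomial.map_mul, Polynomial.map_pow]
end
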